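/- Let ω be a weight on ℝ^d (continuous, symmetric, nonnegative, submultiplicative), let μ be ω-moderate, and let Φ = (φ_1,…,φ_r) with each φ_i ∈ W^1_ω. If the synthesis operator S_Φ has ℓ^p_μ-stability for some p ∈ [1,∞], then S_Φ has ℓ^q_μ-stability for every q ∈ [1,∞]. -/

import Mathlib

open MeasureTheory Filter Topology ENNReal Real Matrix

noncomputable section

variable {d : ℕ}

/-- embedding of `ℤ^d` into `ℝ^d` -/
def zc (j : Fin d → ℤ) : Fin d → ℝ := fun i => (j i : ℝ)

/-- weighted `ℓ^p_ν` norm of a sequence on `ℤ^d` -/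
def lpW (p : ℝ≥0∞) (ν : (Fin d → ℝ) → ℝ) (c : (Fin d → ℤ) → ℂ) : ℝ≥0∞ :=
  if p = ∞ then ⨆ j, (‖c j‖₊ : ℝ≥0∞) * ENNReal.ofReal (ν (zc j))
  else (∑' j, ((‖c j‖₊ : ℝ≥0∞) * ENNReal.ofReal (ν (zc j))) ^ p.toReal) ^ (1 / p.toReal)

/-- weighted `L^p_ν` norm -/
def LpW (p : ℝ≥0∞) (ν : (Fin d → ℝ) → ℝ) (f : (Fin d → ℝ) → ℂ) : ℝ≥0∞ :=
  eLpNorm (fun x => ν x • f x) p volume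

/-- the unit cube `[0,1]^d` -/
def cube : Set (Fin d → ℝ) := Set.Icc 0 1

/-- local essential supremum of `|f|` on `j + [0,1]^d` -/
def amal (f : (Fin d → ℝ) → ℂ) (j : Fin d → ℤ) : ℝ≥0∞ :=
  essSup (fun x => (‖f (x + zc j)‖₊ : ℝ≥0∞)) (volume.restrict cube)

/-- Wiener amalgam norm `W^p_ν` -/
def WW (p : ℝ≥0∞) (ν : (Fin d → ℝ) → ℝ) (f : (Fin d → ℝ) → ℂ) : ℝ≥0∞ :=
  if p = ∞ then ⨆ j, amal f j * ENNReal.ofReal (ν (zc j))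
  else (∑' j, (amal f j * ENNReal.ofReal (ν (zc j))) ^ p.toReal) ^ (1 / p.toReal)

/-- the norm of `𝓛^p_ν` -/
def curlyL (p : ℝ≥0∞) (ν : (Fin d → ℝ) → ℝ) (f : (Fin d → ℝ) → ℂ) : ℝ≥0∞ :=
  if p = ∞ then
    essSup (fun x => ∑' j, (‖f (x + zc j)‖₊ : ℝ≥0∞) * ENNReal.ofReal (ν (x + zc j)))
      (volume.restrict cube)
  else (∫⁻ x in cube,
      (∑' j, (‖f (x + zc j)‖₊ : ℝ≥0∞) * ENNReal.ofReal (ν (x + zc j))) ^ p.toReal) ^ (1 / p.toReal)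

/-- a weight: continuous, symmetric, nonnegative, submultiplicative -/
def IsWeight (ω : (Fin d → ℝ) → ℝ) : Prop :=
  Continuous ω ∧ (∀ x, ω (-x) = ω x) ∧ (∀ x, 0 ≤ ω x) ∧ ∀ x y, ω (x + y) ≤ ω x * ω y

/-- `μ` is an `ω`-moderate weight -/
def IsModerate (ω μ : (Fin d → ℝ) → ℝ) : Prop :=
  (∀ x, 0 ≤ μ x) ∧ ∃ C₀ > 0, ∀ x y, μ (x + y) ≤ C₀ * ω x * μ y

/-- semi-convolution of a function and a sequence -/
def semiConv (f : (Fin d → ℝ) → ℂ) (c : (Fin d → ℤ) → ℂ) : (Fin d → ℝ) → ℂ :=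
  fun x => ∑' j, c j * f (x - zc j)

/-- Fourier transform `φ̂(ξ) = ∫ φ(x) e^{-i x·ξ} dx` -/
def FT (φ : (Fin d → ℝ) → ℂ) (ξ : Fin d → ℝ) : ℂ :=
  ∫ x : Fin d → ℝ, φ x * Complex.exp (-(Complex.I * (∑ i, (x i : ℂ) * (ξ i : ℂ))))

/-- the Gram matrix `[Φ̂,Φ̂](ξ)` -/
def Gram {r : ℕ} (Φ : Fin r → (Fin d → ℝ) → ℂ) (ξ : Fin d → ℝ) : Matrix (Fin r) (Fin r) ℂ :=
  Matrix.of fun i i' =>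
    ∑' k : Fin d → ℤ, FT (Φ i) (ξ + (2 * π) • zc k) * star (FT (Φ i') (ξ + (2 * π) • zc k))

/-- the dimension of the span of a family of vectors in `ℂ^r` -/
def rankSpan {r : ℕ} (v : (Fin d → ℤ) → (Fin r → ℂ)) : ℕ :=
  Module.finrank ℂ (Submodule.span ℂ (Set.range v))

/-- the synthesis operator `S_Φ` -/
def SynOp {r : ℕ} (Φ : Fin r → (Fin d → ℝ) → ℂ) (c : Fin r → (Fin d → ℤ) → ℂ) :
    (Fin d → ℝ) → ℂ :=
  fun x => ∑ i, ∑' j, c i j * Φ i (x - zc j)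

/-- the weighted shift-invariant space `V^p_μ(Φ)` -/
def VSI {r : ℕ} (p : ℝ≥0∞) (μ : (Fin d → ℝ) → ℝ) (Φ : Fin r → (Fin d → ℝ) → ℂ) :
    Set ((Fin d → ℝ) → ℂ) :=
  {f | AEStronglyMeasurable f volume ∧ LpW p μ f < ∞ ∧
    ∃ c : Fin r → (Fin d → ℤ) → ℂ, (∀ i, lpW p μ (c i) < ∞) ∧ f =ᵐ[volume] SynOp Φ c}

/-- `ℓ^p_μ`-stability of the synthesis operator -/
def Stable {r : ℕ} (p : ℝ≥0∞) (μ : (Fin d → ℝ) → ℝ) (Φ : Fin r → (Fin d → ℝ) → ℂ) : Prop :=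
  ∃ C : ℝ≥0∞, 0 < C ∧ C < ∞ ∧ ∀ c : Fin r → (Fin d → ℤ) → ℂ, (∀ i, lpW p μ (c i) < ∞) →
    C⁻¹ * (∑ i, lpW p μ (c i)) ≤ LpW p μ (SynOp Φ c) ∧
      LpW p μ (SynOp Φ c) ≤ C * ∑ i, lpW p μ (c i)

/-- `{φ_i(·-j)}` is a `p`-frame for `V^p_μ(Φ)` -/
def PFrame {r : ℕ} (p : ℝ≥0∞) (μ : (Fin d → ℝ) → ℝ) (Φ : Fin r → (Fin d → ℝ) → ℂ) : Prop :=
  ∃ C : ℝ≥0∞, 0 < C ∧ C < ∞ ∧ ∀ f ∈ VSI p μ Φ,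
    C⁻¹ * LpW p μ f ≤ ∑ i, lpW p μ (fun j => ∫ x, f x * Φ i (x - zc j)) ∧
      ∑ i, lpW p μ (fun j => ∫ x, f x * Φ i (x - zc j)) ≤ C * LpW p μ f

/-- `V^p_μ(Φ)` is closed in `L^p_μ` -/
def VClosedL {r : ℕ} (p : ℝ≥0∞) (μ : (Fin d → ℝ) → ℝ) (Φ : Fin r → (Fin d → ℝ) → ℂ) : Prop :=
  ∀ f : (Fin d → ℝ) → ℂ, AEStronglyMeasurable f volume → LpW p μ f < ∞ →
    ∀ F : ℕ → (Fin d → ℝ) → ℂ, (∀ n, F n ∈ VSI p μ Φ) →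
      Tendsto (fun n => LpW p μ (f - F n)) atTop (𝓝 0) → f ∈ VSI p μ Φ

/-- `V^p_μ(Φ)` is closed in `W^p_μ` -/
def VClosedW {r : ℕ} (p : ℝ≥0∞) (μ : (Fin d → ℝ) → ℝ) (Φ : Fin r → (Fin d → ℝ) → ℂ) : Prop :=
  ∀ f : (Fin d → ℝ) → ℂ, AEStronglyMeasurable f volume → WW p μ f < ∞ →
    ∀ F : ℕ → (Fin d → ℝ) → ℂ, (∀ n, F n ∈ VSI p μ Φ) →
      Tendsto (fun n => WW p μ (f - F n)) atTop (𝓝 0) → f ∈ VSI p μ Φ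

end

open MeasureTheory Filter Topology ENNReal Real Matrix


/-- The `ℓ^p` norm of an extended nonnegative sequence. -/
noncomputable def seqNorm {ι : Type*} (p : ℝ≥0∞) (g : ι → ℝ≥0∞) : ℝ≥0∞ :=
  if p = ∞ then ⨆ j, g j else (∑' j, g j ^ p.toReal) ^ (1 / p.toReal)

section SeqNorm

variable {ι κ : Type*} {p : ℝ≥0∞}

theorem one_le_toReal_of_one_le (hp : 1 ≤ p) (h : p ≠ ∞) : 1 ≤ p.toReal := by
  simpa using ENNReal.toReal_mono h hp

theorem seqNorm_mono {f g : ι → ℝ≥0∞} (h : ∀ j, f j ≤ g j) : seqNorm p f ≤ seqNorm p g := by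
  unfold seqNorm
  split_ifs with hp
  · exact iSup_mono h
  · refine ENNReal.rpow_le_rpow (ENNReal.tsum_le_tsum fun j => ?_) (by positivity)
    exact ENNReal.rpow_le_rpow (h j) (by positivity)

theorem seqNorm_const_mul (hp : 1 ≤ p) (a : ℝ≥0∞) (g : ι → ℝ≥0∞) :
    seqNorm p (fun j => a * g j) = a * seqNorm p g := by
  unfold seqNorm
  split_ifs with h
  · rw [ENNReal.mul_iSup]
  · have h1 := one_le_toReal_of_one_le hp h
    simp_rw [ENNReal.mul_rpow_of_nonneg _ _ (zero_le_one.trans h1)]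
    rw [ENNReal.tsum_mul_left, ENNReal.mul_rpow_of_nonneg _ _ (by positivity), ← ENNReal.rpow_mul,
      mul_one_div_cancel (by positivity), ENNReal.rpow_one]

theorem seqNorm_comp_equiv (e : κ ≃ ι) (g : ι → ℝ≥0∞) :
    seqNorm p (fun k => g (e k)) = seqNorm p g := by
  unfold seqNorm
  split_ifs with h
  · exact e.iSup_comp
  · rw [e.tsum_eq (fun j => g j ^ p.toReal)]

theorem seqNorm_zero (hp : 1 ≤ p) : seqNorm p (fun _ : ι => 0) = 0 := by
  simpa using seqNorm_const_mul hp 0 (fun _ : ι => 0)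

theorem seqNorm_add_le (hp : 1 ≤ p) (f g : ι → ℝ≥0∞) :
    seqNorm p (fun j => f j + g j) ≤ seqNorm p f + seqNorm p g := by
  unfold seqNorm
  split_ifs with h
  · exact iSup_le fun j => add_le_add (le_iSup f j) (le_iSup g j)
  · have h1 := one_le_toReal_of_one_le hp h
    have h0 : 0 < p.toReal := by linarith
    rw [one_div, ENNReal.rpow_inv_le_iff h0, ENNReal.tsum_eq_iSup_sum]
    refine iSup_le fun s => ?_
    rw [← ENNReal.rpow_inv_le_iff h0, ← one_div]
    refine (ENNReal.Lp_add_le s f g h1).trans ?_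
    gcongr <;> exact ENNReal.sum_le_tsum s

theorem seqNorm_finset_sum_le (hp : 1 ≤ p) (s : Finset κ) (g : κ → ι → ℝ≥0∞) :
    seqNorm p (fun j => ∑ k ∈ s, g k j) ≤ ∑ k ∈ s, seqNorm p (g k) := by
  classical
  induction s using Finset.induction_on with
  | empty => simp [seqNorm_zero hp]
  | insert a s ha ih =>
    simp_rw [Finset.sum_insert ha]
    exact (seqNorm_add_le hp _ _).trans (by gcongr)

/-- Minkowski's inequality for arbitrary sums. -/
theorem seqNorm_tsum_le (hp : 1 ≤ p) (g : κ → ι → ℝ≥0∞) :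
    seqNorm p (fun j => ∑' k, g k j) ≤ ∑' k, seqNorm p (g k) := by
  by_cases h : p = ∞
  · simp only [seqNorm, h, if_true]
    exact iSup_le fun j => ENNReal.tsum_le_tsum fun k => le_iSup (g k) j
  · have h1 := one_le_toReal_of_one_le hp h
    have h0 : 0 < p.toReal := by linarith
    simp only [seqNorm, h, if_false]
    rw [one_div, ENNReal.rpow_inv_le_iff h0, ENNReal.tsum_eq_iSup_sum]
    refine iSup_le fun s => ?_
    have hlim : Tendsto (fun t : Finset κ => ∑ j ∈ s, (∑ k ∈ t, g k j) ^ p.toReal) atTop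
        (𝓝 (∑ j ∈ s, (∑' k, g k j) ^ p.toReal)) :=
      tendsto_finsetSum _ fun j _ =>
        (ENNReal.continuous_rpow_const.tendsto _).comp ENNReal.summable.hasSum
    refine le_of_tendsto hlim (Eventually.of_forall fun t => ?_)
    have h2 := seqNorm_finset_sum_le hp t g
    simp only [seqNorm, h, if_false] at h2
    rw [one_div, ENNReal.rpow_inv_le_iff h0] at h2
    refine (ENNReal.sum_le_tsum s).trans (h2.trans ?_)
    exact ENNReal.rpow_le_rpow (ENNReal.sum_le_tsum t) h0.le

theorem le_seqNorm (hp : 1 ≤ p) (g : ι → ℝ≥0∞) (j : ι) : g j ≤ seqNorm p g := by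
  unfold seqNorm
  split_ifs with h
  · exact le_iSup g j
  · have h1 := one_le_toReal_of_one_le hp h
    have h0 : 0 < p.toReal := by linarith
    rw [one_div, ENNReal.le_rpow_inv_iff h0]
    exact ENNReal.le_tsum j

theorem seqNorm_le_tsum (hp : 1 ≤ p) (g : ι → ℝ≥0∞) : seqNorm p g ≤ ∑' j, g j := by
  classical
  have hg : g = fun j => ∑' k, if j = k then g k else 0 := by
    ext j
    rw [tsum_eq_single j (fun k hk => if_neg hk.symm), if_pos rfl]
  conv_lhs => rw [hg]
  refine (seqNorm_tsum_le hp _).trans (ENNReal.tsum_le_tsum fun k => ?_)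
  unfold seqNorm
  split_ifs with h
  · refine iSup_le fun j => ?_
    by_cases hj : j = k <;> simp [hj]
  · have h1 := one_le_toReal_of_one_le hp h
    have h0 : 0 < p.toReal := by linarith
    rw [tsum_eq_single k (fun j hj => by simp [hj, h0])]
    simp [ENNReal.rpow_rpow_inv h0.ne']

end SeqNorm

section Convolution

variable {V : Type*} [AddCommGroup V] {p q : ℝ≥0∞}

theorem tsum_sub_mul_eq (h g : V → ℝ≥0∞) (k : V) :
    ∑' j, h (k - j) * g j = ∑' m, h m * g (k - m) := by
  rw [← (Equiv.subLeft k).tsum_eq]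
  simp

/-- Young's inequality for the convolution of an `ℓ^1` sequence and an `ℓ^p` sequence. -/
theorem seqNorm_conv_le (hp : 1 ≤ p) (h g : V → ℝ≥0∞) :
    seqNorm p (fun k => ∑' j, h (k - j) * g j) ≤ (∑' m, h m) * seqNorm p g := by
  simp_rw [tsum_sub_mul_eq]
  refine (seqNorm_tsum_le hp _).trans ?_
  rw [← ENNReal.tsum_mul_right]
  refine ENNReal.tsum_le_tsum fun m => ?_
  rw [seqNorm_const_mul hp]
  exact (congrArg _ (seqNorm_comp_equiv (Equiv.subRight m) g)).le

theorem conv_lt_top (hp : 1 ≤ p) {h g : V → ℝ≥0∞} (hh : ∑' m, h m < ∞) (hg : seqNorm p g < ∞)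
    (k : V) : ∑' j, h (k - j) * g j < ∞ :=
  ((le_seqNorm hp (fun k => ∑' j, h (k - j) * g j) k).trans (seqNorm_conv_le hp h g)).trans_lt
    (ENNReal.mul_lt_top hh hg)

/-- A windowed `ℓ^p` norm, taken in `ℓ^q` over the translates of the window `w`. -/
noncomputable def windowNorm (p q : ℝ≥0∞) (w g : V → ℝ≥0∞) : ℝ≥0∞ :=
  seqNorm q fun n => seqNorm p fun j => w (j - n) * g j

theorem window_le (hp : 1 ≤ p) (w g : V → ℝ≥0∞) (n : V) :
    seqNorm p (fun j => w (j - n) * g j) ≤ ∑' m, w m * g (n + m) := by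
  refine (seqNorm_le_tsum hp _).trans_eq ?_
  rw [← (Equiv.addLeft n).tsum_eq]
  simp

theorem windowNorm_le (hp : 1 ≤ p) (hq : 1 ≤ q) (w g : V → ℝ≥0∞) :
    windowNorm p q w g ≤ (∑' m, w m) * seqNorm q g := by
  refine (seqNorm_mono (window_le hp w g)).trans ((seqNorm_tsum_le hq _).trans ?_)
  rw [← ENNReal.tsum_mul_right]
  refine ENNReal.tsum_le_tsum fun m => ?_
  rw [seqNorm_const_mul hq]
  exact (congrArg _ (seqNorm_comp_equiv (Equiv.addRight m) g)).le

theorem le_windowNorm (hp : 1 ≤ p) {w : V → ℝ≥0∞} (hw : 1 ≤ w 0) (g : V → ℝ≥0∞) :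
    seqNorm q g ≤ windowNorm p q w g := by
  refine seqNorm_mono fun n => ?_
  refine le_trans ?_ (le_seqNorm hp _ n)
  rw [sub_self]
  exact le_mul_of_one_le_left' hw

theorem windowNorm_conv_le (hp : 1 ≤ p) (hq : 1 ≤ q) (w h g : V → ℝ≥0∞) :
    windowNorm p q w (fun k => ∑' j, h (k - j) * g j) ≤ (∑' m, h m) * windowNorm p q w g := by
  have key : ∀ n, seqNorm p (fun k => w (k - n) * ∑' j, h (k - j) * g j)
      ≤ ∑' m, h m * seqNorm p (fun k => w (k - (n - m)) * g k) := by
    intro n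
    simp_rw [tsum_sub_mul_eq, ← ENNReal.tsum_mul_left]
    refine (seqNorm_tsum_le hp _).trans (ENNReal.tsum_le_tsum fun m => ?_)
    rw [← seqNorm_const_mul hp, ← seqNorm_comp_equiv (Equiv.addRight m)]
    refine seqNorm_mono fun k => le_of_eq ?_
    simp only [Equiv.coe_addRight, add_sub_cancel_right]
    rw [show k + m - n = k - (n - m) by abel]
    ring
  refine (seqNorm_mono key).trans ((seqNorm_tsum_le hq _).trans ?_)
  rw [← ENNReal.tsum_mul_right]
  refine ENNReal.tsum_le_tsum fun m => ?_
  rw [seqNorm_const_mul hq]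
  exact (congrArg _ (seqNorm_comp_equiv (Equiv.subRight m)
    (fun n => seqNorm p fun k => w (k - n) * g k))).le

/-- Absorbing the term `a` into the left-hand side. -/
theorem le_two_mul_of_le_add_half {a b θ : ℝ≥0∞} (ha : a ≠ ∞) (hθ : θ ≤ 2⁻¹)
    (h : a ≤ b + θ * a) : a ≤ 2 * b := by
  have h1 : a ≤ b + a / 2 := h.trans (by
    rw [div_eq_mul_inv, mul_comm a]; gcongr)
  have h2 : a / 2 + a / 2 ≤ b + a / 2 := by rwa [ENNReal.add_halves]
  have h3 : a / 2 ≤ b := (ENNReal.add_le_add_iff_right (ENNReal.div_ne_top ha (by simp))).1 h2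
  calc a = a / 2 + a / 2 := (ENNReal.add_halves a).symm
    _ ≤ b + b := by gcongr
    _ = 2 * b := (two_mul b).symm

/-- The lower `ℓ^p`-bound with commutator errors, tested on translates of one slowly varying
window, implies a lower `ℓ^q`-bound. -/
theorem seqNorm_le_of_window (hp : 1 ≤ p) (hq : 1 ≤ q) {w near far : V → ℝ≥0∞} {C : ℝ≥0∞}
    (hw0 : 1 ≤ w 0) (hw : ∑' m, w m < ∞) (hsmall : C * (∑' m, near m + ∑' m, far m) ≤ 2⁻¹)
    {γ F : V → ℝ≥0∞} (hγ : seqNorm q γ < ∞)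
    (hst : ∀ n, seqNorm p (fun j => w (j - n) * γ j) ≤
      C * seqNorm p (fun k => w (k - n) * F k + ∑' j, near (k - j) * (w (j - n) * γ j)
        + w (k - n) * ∑' j, far (k - j) * γ j)) :
    seqNorm q γ ≤ 2 * (C * ((∑' m, w m) * seqNorm q F)) := by
  have hfin : windowNorm p q w γ ≠ ∞ :=
    ((windowNorm_le hp hq w γ).trans_lt (ENNReal.mul_lt_top hw hγ)).ne
  have hmain : windowNorm p q w γ ≤ C * windowNorm p q w F
      + C * (∑' m, near m + ∑' m, far m) * windowNorm p q w γ := by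
    calc windowNorm p q w γ
        ≤ seqNorm q (fun n => C * (seqNorm p (fun k => w (k - n) * F k)
          + (∑' m, near m) * seqNorm p (fun k => w (k - n) * γ k)
          + seqNorm p (fun k => w (k - n) * ∑' j, far (k - j) * γ j))) := by
          refine seqNorm_mono fun n => (hst n).trans ?_
          gcongr
          refine (seqNorm_add_le hp _ _).trans ?_
          gcongr
          refine (seqNorm_add_le hp _ _).trans ?_
          gcongr
          exact seqNorm_conv_le hp near _
      _ ≤ C * (windowNorm p q w F + (∑' m, near m) * windowNorm p q w γ
          + windowNorm p q w (fun k => ∑' j, far (k - j) * γ j)) := by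
          rw [seqNorm_const_mul hq]
          gcongr
          refine (seqNorm_add_le hq _ _).trans ?_
          gcongr
          · refine (seqNorm_add_le hq _ _).trans ?_
            rw [seqNorm_const_mul hq]
            rfl
          · rfl
      _ ≤ C * (windowNorm p q w F + (∑' m, near m) * windowNorm p q w γ
          + (∑' m, far m) * windowNorm p q w γ) := by
          gcongr
          exact windowNorm_conv_le hp hq w far γ
      _ = _ := by ring
  calc seqNorm q γ ≤ windowNorm p q w γ := le_windowNorm hp hw0 γ
    _ ≤ 2 * (C * windowNorm p q w F) := le_two_mul_of_le_add_half hfin hsmall hmain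
    _ ≤ _ := by gcongr; exact windowNorm_le hp hq w F

end Convolution

section Window

theorem exists_pos_mul_le {a θ : ℝ≥0∞} (ha : a ≠ ∞) (hθ : θ ≠ 0) :
    ∃ η : ℝ, 0 < η ∧ a * ENNReal.ofReal η ≤ θ := by
  lift a to NNReal using ha
  obtain ⟨t, ht0, ht⟩ := ENNReal.lt_iff_exists_nnreal_btwn.1 (pos_iff_ne_zero.2 hθ)
  have ht0 : 0 < t := by exact_mod_cast ht0
  refine ⟨((t / (a + 1) : NNReal) : ℝ), by positivity, ?_⟩
  refine le_trans ?_ ht.le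
  rw [ENNReal.ofReal_coe_nnreal, ← ENNReal.coe_mul, ENNReal.coe_le_coe, mul_div_assoc']
  apply div_le_of_le_mul₀ (by positivity) (by positivity)
  nlinarith [mul_comm a t, ht0]

theorem exists_finset_tail_le {ι : Type*} {h : ι → ℝ≥0∞} (hh : ∑' m, h m ≠ ∞) {η : ℝ≥0∞}
    (hη : η ≠ 0) : ∃ S : Finset ι, ∑' m, Set.indicator ((S : Set ι)ᶜ) h m ≤ η := by
  obtain ⟨S, hS⟩ := ((tendsto_order.1 (ENNReal.tendsto_tsum_compl_atTop_zero hh)).2 η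
    (pos_iff_ne_zero.2 hη)).exists
  refine ⟨S, le_of_eq_of_le ?_ hS.le⟩
  rw [← tsum_subtype]
  rfl

theorem tsum_pi_prod {f : ℤ → ℝ≥0∞} (d : ℕ) :
    ∑' j : Fin d → ℤ, ∏ i, f (j i) = (∑' n, f n) ^ d := by
  induction d with
  | zero => simp
  | succ d ih =>
    rw [← (Fin.consEquiv fun _ => ℤ).tsum_eq]
    simp only [Fin.consEquiv_apply, Fin.prod_univ_succ, Fin.cons_zero, Fin.cons_succ]
    rw [ENNReal.tsum_prod (f := fun (a : ℤ) (v : Fin d → ℤ) => f a * ∏ i, f (v i))]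
    simp only [ENNReal.tsum_mul_left, ih, ENNReal.tsum_mul_right]
    ring

theorem tsum_exp_neg_abs_lt_top {ε : ℝ} (hε : 0 < ε) :
    ∑' n : ℤ, ENNReal.ofReal (Real.exp (-(ε * |(n : ℝ)|))) < ∞ := by
  have hn : Summable fun n : ℕ => Real.exp (-(ε * (n : ℝ))) := by
    have := Real.summable_exp_nat_mul_of_ge (c := -ε) (f := fun n => (n : ℝ)) (by linarith)
      (fun _ => le_rfl)
    simpa using this
  have hs : Summable fun n : ℤ => Real.exp (-(ε * |(n : ℝ)|)) :=
    summable_int_iff_summable_nat_and_neg.2 ⟨by simpa using hn, by simpa using hn⟩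
  rw [← ENNReal.ofReal_tsum_of_nonneg (fun _ => (Real.exp_pos _).le) hs]
  exact ENNReal.ofReal_lt_top

/-- Summable windows on `ℤ^d` of arbitrarily small relative variation along finitely many
directions. -/
theorem exists_window {d : ℕ} (S : Finset (Fin d → ℤ)) {δ : ℝ} (hδ : 0 < δ) :
    ∃ w : (Fin d → ℤ) → ℝ, (∀ j, 0 ≤ w j) ∧ w 0 = 1 ∧ ∑' j, ENNReal.ofReal (w j) < ∞ ∧
      ∀ j k, k - j ∈ S → |w j - w k| ≤ δ * w j := by
  set len : (Fin d → ℤ) → ℝ := fun j => ∑ i, |(j i : ℝ)| with hlen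
  have len_nonneg : ∀ j, 0 ≤ len j := fun j => Finset.sum_nonneg fun _ _ => abs_nonneg _
  have len_sub : ∀ j k, |len j - len k| ≤ len (k - j) := by
    intro j k
    simp only [hlen]
    rw [← Finset.sum_sub_distrib]
    refine (Finset.abs_sum_le_sum_abs _ _).trans (Finset.sum_le_sum fun i _ => ?_)
    refine (abs_abs_sub_abs_le _ _).trans_eq ?_
    rw [abs_sub_comm]
    simp
  set L := ∑ m ∈ S, len m
  have hL0 : 0 ≤ L := Finset.sum_nonneg fun m _ => len_nonneg m
  set ε := Real.log (1 + δ) / (L + 1) with hεdef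
  have hlog : 0 < Real.log (1 + δ) := Real.log_pos (by linarith)
  have hε : 0 < ε := by positivity
  have hεL : ε * L ≤ Real.log (1 + δ) := by
    rw [hεdef, div_mul_eq_mul_div, div_le_iff₀ (by positivity)]
    nlinarith
  refine ⟨fun j => Real.exp (-(ε * len j)), fun j => (Real.exp_pos _).le, by simp [hlen], ?_, ?_⟩
  · have : ∀ j : Fin d → ℤ, ENNReal.ofReal (Real.exp (-(ε * len j)))
        = ∏ i, ENNReal.ofReal (Real.exp (-(ε * |(j i : ℝ)|))) := by
      intro j
      rw [← ENNReal.ofReal_prod_of_nonneg (fun _ _ => (Real.exp_pos _).le), ← Real.exp_sum]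
      simp [hlen, Finset.mul_sum]
    simp_rw [this]
    rw [tsum_pi_prod (f := fun n : ℤ => ENNReal.ofReal (Real.exp (-(ε * |(n : ℝ)|))))]
    exact ENNReal.pow_lt_top (tsum_exp_neg_abs_lt_top hε)
  · intro j k hjk
    have hm : len (k - j) ≤ L :=
      Finset.single_le_sum (f := len) (fun m _ => len_nonneg m) hjk
    have habs := abs_le.1 ((len_sub j k).trans hm)
    set t := ε * (len j - len k)
    have ht1 : t ≤ Real.log (1 + δ) := by
      refine le_trans ?_ hεL
      exact mul_le_mul_of_nonneg_left habs.2 hε.le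
    have ht2 : -Real.log (1 + δ) ≤ t := by
      refine le_trans (neg_le_neg hεL) ?_
      rw [← mul_neg]
      exact mul_le_mul_of_nonneg_left habs.1 hε.le
    have hk : Real.exp (-(ε * len k)) = Real.exp (-(ε * len j)) * Real.exp t := by
      rw [← Real.exp_add]; congr 1; ring
    have he1 : Real.exp t ≤ 1 + δ := by
      rw [← Real.exp_log (show 0 < 1 + δ by linarith)]; exact Real.exp_le_exp.2 ht1
    have he2 : 1 - δ ≤ Real.exp t := by
      have h1 : (1 + δ)⁻¹ ≤ Real.exp t := by
        rw [← Real.exp_log (show 0 < 1 + δ by linarith), ← Real.exp_neg]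
        exact Real.exp_le_exp.2 ht2
      refine le_trans ?_ h1
      rw [← one_div, le_div_iff₀ (by linarith)]
      nlinarith
    beta_reduce
    rw [hk, show Real.exp (-(ε * len j)) - Real.exp (-(ε * len j)) * Real.exp t
      = Real.exp (-(ε * len j)) * (1 - Real.exp t) by ring, abs_mul,
      abs_of_pos (Real.exp_pos _), mul_comm]
    gcongr
    rw [abs_le]
    constructor <;> linarith

/-- A lower `ℓ^p`-bound that is stable, up to commutators with an `ℓ^1` kernel, under
multiplication by arbitrary windows yields a lower `ℓ^q`-bound. -/
theorem exists_seqNorm_le_of_commutator {d : ℕ} {p q : ℝ≥0∞} (hp : 1 ≤ p) (hq : 1 ≤ q)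
    {h : (Fin d → ℤ) → ℝ≥0∞} (hh : ∑' m, h m < ∞) {C : ℝ≥0∞} (hC : C < ∞) :
    ∃ C' < ∞, ∀ γ F : (Fin d → ℤ) → ℝ≥0∞, seqNorm q γ < ∞ →
      (∀ w : (Fin d → ℤ) → ℝ, (∀ j, 0 ≤ w j) →
        seqNorm p (fun j => ENNReal.ofReal (w j) * γ j) < ∞ →
        seqNorm p (fun j => ENNReal.ofReal (w j) * γ j) ≤
          C * seqNorm p (fun k => ENNReal.ofReal (w k) * F k
            + ∑' j, h (k - j) * (ENNReal.ofReal |w j - w k| * γ j))) →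
      seqNorm q γ ≤ C' * seqNorm q F := by
  obtain ⟨η, hη0, hη⟩ := exists_pos_mul_le (a := C * 3) (θ := 2⁻¹)
    (ENNReal.mul_ne_top hC.ne (by simp)) (by simp)
  obtain ⟨δ, hδ0, hδ⟩ := exists_pos_mul_le (θ := ENNReal.ofReal η) hh.ne (by simpa using hη0)
  obtain ⟨S, hS⟩ := exists_finset_tail_le hh.ne (η := ENNReal.ofReal η) (by simpa using hη0)
  obtain ⟨w, hw_nonneg, hw0, hw, hwS⟩ := exists_window S hδ0
  set far : (Fin d → ℤ) → ℝ≥0∞ := Set.indicator ((S : Set (Fin d → ℤ))ᶜ) h with hfar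
  set near : (Fin d → ℤ) → ℝ≥0∞ := fun m => h m * ENNReal.ofReal δ + far m with hnear
  have hnear_sum : ∑' m, near m ≤ ENNReal.ofReal η + ENNReal.ofReal η := by
    rw [hnear, ENNReal.tsum_add, ENNReal.tsum_mul_right]
    gcongr
  have hdiff : ∀ n j k, h (k - j) * ENNReal.ofReal |w (j - n) - w (k - n)| ≤
      near (k - j) * ENNReal.ofReal (w (j - n)) + ENNReal.ofReal (w (k - n)) * far (k - j) := by
    intro n j k
    by_cases hmem : k - j ∈ S
    · have h1 : |w (j - n) - w (k - n)| ≤ δ * w (j - n) := hwS _ _ (by simpa using hmem)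
      calc h (k - j) * ENNReal.ofReal |w (j - n) - w (k - n)|
          ≤ h (k - j) * (ENNReal.ofReal δ * ENNReal.ofReal (w (j - n))) := by
            rw [← ENNReal.ofReal_mul hδ0.le]; gcongr
        _ ≤ near (k - j) * ENNReal.ofReal (w (j - n)) := by
            rw [← mul_assoc]; gcongr; exact le_self_add
        _ ≤ _ := le_self_add
    · have h1 : |w (j - n) - w (k - n)| ≤ w (j - n) + w (k - n) := by
        rw [abs_le]; constructor <;> linarith [hw_nonneg (j - n), hw_nonneg (k - n)]
      have h2 : far (k - j) = h (k - j) := Set.indicator_of_mem (by simpa using hmem) _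
      calc h (k - j) * ENNReal.ofReal |w (j - n) - w (k - n)|
          ≤ h (k - j) * (ENNReal.ofReal (w (j - n)) + ENNReal.ofReal (w (k - n))) := by
            rw [← ENNReal.ofReal_add (hw_nonneg _) (hw_nonneg _)]; gcongr
        _ = far (k - j) * ENNReal.ofReal (w (j - n))
            + ENNReal.ofReal (w (k - n)) * far (k - j) := by rw [h2]; ring
        _ ≤ _ := by gcongr; exact le_add_self
  refine ⟨2 * (C * ∑' m, ENNReal.ofReal (w m)),
    ENNReal.mul_lt_top (by simp) (ENNReal.mul_lt_top hC hw), fun γ F hγ hst => ?_⟩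
  have key := seqNorm_le_of_window (w := fun j => ENNReal.ofReal (w j)) (near := near) (far := far)
    (C := C) hp hq (by simp [hw0]) hw ?_ (γ := γ) (F := F) hγ ?_
  · simpa only [mul_assoc] using key
  · refine le_trans ?_ hη
    rw [mul_assoc]
    gcongr
    calc ∑' m, near m + ∑' m, far m
        ≤ ENNReal.ofReal η + ENNReal.ofReal η + ENNReal.ofReal η := by gcongr
      _ = 3 * ENNReal.ofReal η := by ring
  · intro n
    have hfin : seqNorm p (fun j => ENNReal.ofReal (w (j - n)) * γ j) < ∞ := by
      refine (window_le hp (fun j => ENNReal.ofReal (w j)) γ n).trans_lt ?_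
      calc ∑' m, ENNReal.ofReal (w m) * γ (n + m)
          ≤ ∑' m, ENNReal.ofReal (w m) * seqNorm q γ :=
            ENNReal.tsum_le_tsum fun m => by gcongr; exact le_seqNorm hq γ _
        _ < ∞ := by rw [ENNReal.tsum_mul_right]; exact ENNReal.mul_lt_top hw hγ
    refine (hst (fun j => w (j - n)) (fun j => hw_nonneg _) hfin).trans ?_
    gcongr
    refine seqNorm_mono fun k => ?_
    rw [add_assoc]
    gcongr
    rw [← ENNReal.tsum_mul_left, ← ENNReal.tsum_add]
    refine ENNReal.tsum_le_tsum fun j => ?_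
    calc h (k - j) * (ENNReal.ofReal |w (j - n) - w (k - n)| * γ j)
        = h (k - j) * ENNReal.ofReal |w (j - n) - w (k - n)| * γ j := by ring
      _ ≤ (near (k - j) * ENNReal.ofReal (w (j - n))
          + ENNReal.ofReal (w (k - n)) * far (k - j)) * γ j := by gcongr; exact hdiff n j k
      _ = _ := by ring

end Window

section Box

variable {d : ℕ}

/-- The half-open unit box `[0,1)^d`. -/
def unitBox : Set (Fin d → ℝ) := Set.univ.pi fun _ => Set.Ico 0 1

theorem measurableSet_unitBox : MeasurableSet (unitBox : Set (Fin d → ℝ)) :=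
  MeasurableSet.univ_pi fun _ => measurableSet_Ico

theorem volume_unitBox : volume (unitBox : Set (Fin d → ℝ)) = 1 := by
  rw [unitBox, volume_pi_pi]
  simp

theorem unitBox_subset_cube : (unitBox : Set (Fin d → ℝ)) ⊆ cube := fun _ hx =>
  ⟨fun i => (hx i trivial).1, fun i => (hx i trivial).2.le⟩

theorem zc_sub (j k : Fin d → ℤ) : zc (j - k) = zc j - zc k := by
  ext i; simp [zc]

/-- Lebesgue measure is the sum of the translates of its restriction to the unit box. -/
theorem volume_eq_sum_map_unitBox :
    (volume : Measure (Fin d → ℝ)) = Measure.sum fun k : Fin d → ℤ =>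
      (volume.restrict unitBox).map (MeasurableEquiv.addRight (zc k)) := by
  set B : (Fin d → ℤ) → Set (Fin d → ℝ) := fun k => {x | (fun i => ⌊x i⌋) = k} with hB
  have hmeas : ∀ k, MeasurableSet (B k) := by
    intro k
    have hfl : Measurable fun x : Fin d → ℝ => fun i => ⌊x i⌋ := by fun_prop
    exact hfl (measurableSet_singleton k)
  have hdisj : Pairwise (Function.onFun Disjoint B) := by
    intro k l hkl
    refine Set.disjoint_left.2 fun x hx hx' => hkl ?_
    rw [← show (fun i => ⌊x i⌋) = k from hx, ← show (fun i => ⌊x i⌋) = l from hx']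
  have hunion : ⋃ k, B k = Set.univ := Set.eq_univ_of_forall fun x => Set.mem_iUnion.2 ⟨_, rfl⟩
  have hpre : ∀ k, (MeasurableEquiv.addRight (zc k)) ⁻¹' B k = unitBox := by
    intro k
    ext x
    simp [hB, unitBox, funext_iff, zc, Int.floor_eq_zero_iff]
  have hsum : (volume : Measure (Fin d → ℝ)) = Measure.sum fun k => volume.restrict (B k) := by
    rw [← Measure.restrict_iUnion hdisj hmeas, hunion, Measure.restrict_univ]
  refine hsum.trans (congrArg _ ?_)
  ext1 k
  have hmp : MeasurePreserving (MeasurableEquiv.addRight (zc k))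
      (volume : Measure (Fin d → ℝ)) volume := measurePreserving_add_right volume (zc k)
  have := hmp.restrict_preimage_emb (MeasurableEquiv.addRight (zc k)).measurableEmbedding (B k)
  rw [hpre] at this
  exact this.map_eq.symm

theorem lintegral_eq_tsum_unitBox (g : (Fin d → ℝ) → ℝ≥0∞) :
    ∫⁻ x, g x = ∑' k : Fin d → ℤ, ∫⁻ x in unitBox, g (x + zc k) := by
  rw [volume_eq_sum_map_unitBox, lintegral_sum_measure]
  refine tsum_congr fun k => ?_
  rw [lintegral_map_equiv, ← volume_eq_sum_map_unitBox]
  rfl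

theorem ae_iff_forall_ae_unitBox {P : (Fin d → ℝ) → Prop} :
    (∀ᵐ x, P x) ↔ ∀ k : Fin d → ℤ, ∀ᵐ x ∂(volume.restrict unitBox), P (x + zc k) := by
  conv_lhs => rw [volume_eq_sum_map_unitBox]
  rw [Measure.ae_sum_iff]
  refine forall_congr' fun k => ?_
  rw [(MeasurableEquiv.addRight (zc k)).measurableEmbedding.ae_map_iff]
  rfl

/-- The `L^s` norm of `f` over the translate of the unit box by `k`. -/
noncomputable def boxNorm (s : ℝ≥0∞) (f : (Fin d → ℝ) → ℂ) (k : Fin d → ℤ) : ℝ≥0∞ :=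
  eLpNorm (fun x => f (x + zc k)) s (volume.restrict unitBox)

theorem boxNorm_top_le_iff {f : (Fin d → ℝ) → ℂ} {k : Fin d → ℤ} {B : ℝ≥0∞} :
    boxNorm ∞ f k ≤ B ↔ ∀ᵐ x ∂(volume.restrict unitBox), ‖f (x + zc k)‖ₑ ≤ B := by
  rw [boxNorm, eLpNorm_exponent_top]
  refine ⟨fun h => ?_, fun h => essSup_le_of_ae_le _ h⟩
  filter_upwards [enorm_ae_le_eLpNormEssSup (fun x => f (x + zc k)) (volume.restrict unitBox)]
    with x hx using hx.trans h

theorem boxNorm_top_mul_le {f : (Fin d → ℝ) → ℂ} {k : Fin d → ℤ} {B t : ℝ≥0∞} (ht0 : t ≠ 0)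
    (ht : t ≠ ∞) (h : ∀ᵐ x ∂(volume.restrict unitBox), ‖f (x + zc k)‖ₑ * t ≤ B) :
    boxNorm ∞ f k * t ≤ B := by
  rw [← ENNReal.le_div_iff_mul_le (Or.inl ht0) (Or.inl ht), boxNorm_top_le_iff]
  filter_upwards [h] with x hx
  rwa [ENNReal.le_div_iff_mul_le (Or.inl ht0) (Or.inl ht)]

theorem boxNorm_le_top {s : ℝ≥0∞} (hs : 1 ≤ s) (f : (Fin d → ℝ) → ℂ) (k : Fin d → ℤ) :
    boxNorm s f k ≤ boxNorm ∞ f k := by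
  have hne : (volume.restrict unitBox : Measure (Fin d → ℝ)) ≠ 0 := by
    rw [Ne, Measure.restrict_eq_zero, volume_unitBox]; exact one_ne_zero
  refine (eLpNorm_mono_enorm_ae (g := fun _ => boxNorm ∞ f k) ?_).trans_eq ?_
  · simpa using boxNorm_top_le_iff.1 le_rfl
  · rw [eLpNorm_const _ (zero_lt_one.trans_le hs).ne' hne]
    simp [volume_unitBox]

theorem eLpNorm_eq_seqNorm_boxNorm {s : ℝ≥0∞} (hs : 1 ≤ s) (f : (Fin d → ℝ) → ℂ) :
    eLpNorm f s volume = seqNorm s (boxNorm s f) := by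
  by_cases h : s = ∞
  · subst h
    simp only [seqNorm, if_true]
    refine le_antisymm ?_ (iSup_le fun k => boxNorm_top_le_iff.2 ?_)
    · rw [eLpNorm_exponent_top]
      refine essSup_le_of_ae_le _ (ae_iff_forall_ae_unitBox.2 fun k => ?_)
      exact boxNorm_top_le_iff.1 (le_iSup (boxNorm ∞ f) k)
    · rw [eLpNorm_exponent_top]
      exact ae_iff_forall_ae_unitBox.1 (enorm_ae_le_eLpNormEssSup f volume) k
  · have h0 : s ≠ 0 := (zero_lt_one.trans_le hs).ne'
    have h1 := one_le_toReal_of_one_le hs h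
    simp only [seqNorm, h, if_false, boxNorm, eLpNorm_eq_lintegral_rpow_enorm_toReal h0 h]
    rw [lintegral_eq_tsum_unitBox]
    congr 1
    refine tsum_congr fun k => ?_
    rw [← ENNReal.rpow_mul, one_div_mul_cancel (by positivity), ENNReal.rpow_one]

theorem boxNorm_smul_le {s K : ℝ≥0∞} {μ : (Fin d → ℝ) → ℝ} (hμ : ∀ x, 0 ≤ μ x) {k : Fin d → ℤ}
    (hK : ∀ x ∈ unitBox, ENNReal.ofReal (μ (x + zc k)) ≤ K * ENNReal.ofReal (μ (zc k)))
    (hKt : K ≠ ∞) (f : (Fin d → ℝ) → ℂ) :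
    boxNorm s (fun x => μ x • f x) k ≤ K * (boxNorm s f k * ENNReal.ofReal (μ (zc k))) := by
  set a : NNReal := (K * ENNReal.ofReal (μ (zc k))).toNNReal with ha
  have hat : (a : ℝ≥0∞) = K * ENNReal.ofReal (μ (zc k)) :=
    ENNReal.coe_toNNReal (ENNReal.mul_ne_top hKt ENNReal.ofReal_ne_top)
  calc boxNorm s (fun x => μ x • f x) k
      ≤ eLpNorm ((a : ℝ) • fun x => f (x + zc k)) s (volume.restrict unitBox) := by
        refine eLpNorm_mono_enorm_ae ?_
        filter_upwards [ae_restrict_mem measurableSet_unitBox] with x hx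
        rw [Pi.smul_apply, enorm_smul, enorm_smul, Real.enorm_of_nonneg (hμ _),
          Real.enorm_of_nonneg a.coe_nonneg, ENNReal.ofReal_coe_nnreal, hat]
        gcongr
        exact hK x hx
    _ = K * (boxNorm s f k * ENNReal.ofReal (μ (zc k))) := by
        rw [eLpNorm_const_smul, Real.enorm_of_nonneg a.coe_nonneg, ENNReal.ofReal_coe_nnreal, hat]
        rw [boxNorm]; ring

theorem boxNorm_mul_le_smul {s K : ℝ≥0∞} {μ : (Fin d → ℝ) → ℝ} (hμ : ∀ x, 0 ≤ μ x)
    {k : Fin d → ℤ} (hKt : K ≠ ∞)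
    (hK : ∀ x ∈ unitBox, ENNReal.ofReal (μ (zc k)) ≤ K * ENNReal.ofReal (μ (x + zc k)))
    (f : (Fin d → ℝ) → ℂ) :
    boxNorm s f k * ENNReal.ofReal (μ (zc k)) ≤ K * boxNorm s (fun x => μ x • f x) k := by
  lift K to NNReal using hKt
  calc boxNorm s f k * ENNReal.ofReal (μ (zc k))
      = eLpNorm (μ (zc k) • fun x => f (x + zc k)) s (volume.restrict unitBox) := by
        rw [eLpNorm_const_smul, Real.enorm_of_nonneg (hμ _), mul_comm, boxNorm]
    _ ≤ eLpNorm ((K : ℝ) • fun x => μ (x + zc k) • f (x + zc k)) s (volume.restrict unitBox) := by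
        refine eLpNorm_mono_enorm_ae ?_
        filter_upwards [ae_restrict_mem measurableSet_unitBox] with x hx
        rw [Pi.smul_apply, Pi.smul_apply, enorm_smul, enorm_smul, enorm_smul,
          Real.enorm_of_nonneg (hμ _), Real.enorm_of_nonneg (hμ _), Real.enorm_of_nonneg K.coe_nonneg,
          ENNReal.ofReal_coe_nnreal, ← mul_assoc]
        gcongr
        exact hK x hx
    _ = K * boxNorm s (fun x => μ x • f x) k := by
        rw [eLpNorm_const_smul, Real.enorm_of_nonneg K.coe_nonneg, ENNReal.ofReal_coe_nnreal, boxNorm]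

theorem LpW_le_seqNorm_boxNorm {s K : ℝ≥0∞} (hs : 1 ≤ s) {μ : (Fin d → ℝ) → ℝ}
    (hμ : ∀ x, 0 ≤ μ x) (hKt : K ≠ ∞)
    (hK : ∀ k, ∀ x ∈ unitBox, ENNReal.ofReal (μ (x + zc k)) ≤ K * ENNReal.ofReal (μ (zc k)))
    (f : (Fin d → ℝ) → ℂ) :
    LpW s μ f ≤ K * seqNorm s (fun k => boxNorm ∞ f k * ENNReal.ofReal (μ (zc k))) := by
  rw [LpW, eLpNorm_eq_seqNorm_boxNorm hs, ← seqNorm_const_mul hs]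
  refine seqNorm_mono fun k => (boxNorm_smul_le hμ (hK k) hKt f).trans ?_
  gcongr
  exact boxNorm_le_top hs f k

theorem seqNorm_boxNorm_le_LpW {s K : ℝ≥0∞} (hs : 1 ≤ s) {μ : (Fin d → ℝ) → ℝ}
    (hμ : ∀ x, 0 ≤ μ x) (hKt : K ≠ ∞)
    (hK : ∀ k, ∀ x ∈ unitBox, ENNReal.ofReal (μ (zc k)) ≤ K * ENNReal.ofReal (μ (x + zc k)))
    (f : (Fin d → ℝ) → ℂ) :
    seqNorm s (fun k => boxNorm s f k * ENNReal.ofReal (μ (zc k))) ≤ K * LpW s μ f := by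
  rw [LpW, eLpNorm_eq_seqNorm_boxNorm hs, ← seqNorm_const_mul hs]
  exact seqNorm_mono fun k => boxNorm_mul_le_smul hμ hKt (hK k) f

end Box

section Synthesis

variable {d r : ℕ}

/-- The values of the synthesis operator on a coset of `ℤ^d`, where `ψ i` samples the `i`-th
generator on that coset. -/
noncomputable def cosetSyn (ψ c : Fin r → (Fin d → ℤ) → ℂ) (k : Fin d → ℤ) : ℂ :=
  ∑ i, ∑' j, c i j * ψ i (k - j)

/-- The total weighted size of the coefficients at a lattice point. -/
noncomputable def coeffSize (m : (Fin d → ℤ) → ℝ≥0∞) (c : Fin r → (Fin d → ℤ) → ℂ)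
    (j : Fin d → ℤ) : ℝ≥0∞ :=
  ∑ i, ‖c i j‖ₑ * m j

theorem SynOp_add_zc (Φ : Fin r → (Fin d → ℝ) → ℂ) (c : Fin r → (Fin d → ℤ) → ℂ)
    (x : Fin d → ℝ) (k : Fin d → ℤ) :
    SynOp Φ c (x + zc k) = cosetSyn (fun i m => Φ i (x + zc m)) c k := by
  simp only [SynOp, cosetSyn, zc_sub, add_sub_assoc]

variable {m M b : (Fin d → ℤ) → ℝ≥0∞} {ψ ψ' : Fin r → (Fin d → ℤ) → ℂ}
  {c : Fin r → (Fin d → ℤ) → ℂ}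

theorem tsum_enorm_coset_le (hM : ∀ k j, m k ≤ M (k - j) * m j)
    (hψ : ∀ i l, ‖ψ i l‖ₑ ≤ b l) (k : Fin d → ℤ) :
    (∑ i, ∑' j, ‖c i j * ψ i (k - j)‖ₑ) * m k ≤
      ∑' j, M (k - j) * b (k - j) * coeffSize m c j := by
  rw [← Summable.tsum_finsetSum (fun i _ => ENNReal.summable), ← ENNReal.tsum_mul_right]
  refine ENNReal.tsum_le_tsum fun j => ?_
  rw [coeffSize, Finset.sum_mul, Finset.mul_sum]
  refine Finset.sum_le_sum fun i _ => ?_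
  calc ‖c i j * ψ i (k - j)‖ₑ * m k ≤ ‖c i j‖ₑ * b (k - j) * (M (k - j) * m j) := by
        rw [enorm_mul]
        gcongr
        · exact hψ i _
        · exact hM k j
    _ = _ := by ring

theorem enorm_cosetSyn_mul_le (hM : ∀ k j, m k ≤ M (k - j) * m j)
    (hψ : ∀ i l, ‖ψ i l‖ₑ ≤ b l) (k : Fin d → ℤ) :
    ‖cosetSyn ψ c k‖ₑ * m k ≤ ∑' j, M (k - j) * b (k - j) * coeffSize m c j := by
  refine le_trans ?_ (tsum_enorm_coset_le hM hψ k)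
  gcongr
  refine (enorm_sum_le _ _).trans (Finset.sum_le_sum fun i _ => enorm_tsum_le_tsum_enorm)

theorem summable_coset (hm0 : ∀ k, m k ≠ 0) (hM : ∀ k j, m k ≤ M (k - j) * m j)
    (hψ : ∀ i l, ‖ψ i l‖ₑ ≤ b l) {k : Fin d → ℤ}
    (hfin : ∑' j, M (k - j) * b (k - j) * coeffSize m c j < ∞) (i : Fin r) :
    Summable fun j => c i j * ψ i (k - j) := by
  refine Summable.of_enorm fun htop => ?_
  have h := tsum_enorm_coset_le (c := c) hM hψ k
  have h2 : ∑ i, ∑' j, ‖c i j * ψ i (k - j)‖ₑ = ∞ :=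
    ENNReal.sum_eq_top.2 ⟨i, Finset.mem_univ _, htop⟩
  rw [h2, ENNReal.top_mul (hm0 k)] at h
  exact absurd hfin (not_lt.2 h)

theorem enorm_coe_real (a : ℝ) : ‖(a : ℂ)‖ₑ = ‖a‖ₑ := by
  rw [enorm_eq_nnnorm, enorm_eq_nnnorm, Complex.nnnorm_real]

theorem coeffSize_smul (a : (Fin d → ℤ) → ℝ) (j : Fin d → ℤ) :
    coeffSize m (fun i j => (a j : ℂ) * c i j) j = ENNReal.ofReal |a j| * coeffSize m c j := by
  simp only [coeffSize, Finset.mul_sum]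
  refine Finset.sum_congr rfl fun i _ => ?_
  rw [enorm_mul, mul_assoc, ← Real.enorm_eq_ofReal_abs, enorm_coe_real]

theorem cosetSyn_smul_eq (a : (Fin d → ℤ) → ℝ) {k : Fin d → ℤ}
    (h₁ : ∀ i, Summable fun j => (a j : ℂ) * c i j * ψ i (k - j))
    (h₂ : ∀ i, Summable fun j => c i j * ψ i (k - j)) :
    cosetSyn ψ (fun i j => (a j : ℂ) * c i j) k =
      (a k : ℂ) * cosetSyn ψ c k + cosetSyn ψ (fun i j => ((a j - a k : ℝ) : ℂ) * c i j) k := by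
  simp only [cosetSyn]
  rw [Finset.mul_sum, ← Finset.sum_add_distrib]
  refine Finset.sum_congr rfl fun i _ => ?_
  have h3 : Summable fun j => ((a j - a k : ℝ) : ℂ) * c i j * ψ i (k - j) := by
    refine ((h₁ i).sub ((h₂ i).mul_left (a k : ℂ))).congr fun j => ?_
    push_cast; ring
  rw [← tsum_mul_left, ← ((h₂ i).mul_left (a k : ℂ)).tsum_add h3]
  refine tsum_congr fun j => ?_
  push_cast; ring

theorem cosetSyn_sub (k : Fin d → ℤ)
    (h₁ : ∀ i, Summable fun j => c i j * ψ i (k - j))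
    (h₂ : ∀ i, Summable fun j => c i j * ψ' i (k - j)) :
    cosetSyn ψ c k - cosetSyn ψ' c k = cosetSyn (fun i l => ψ i l - ψ' i l) c k := by
  simp only [cosetSyn]
  rw [← Finset.sum_sub_distrib]
  refine Finset.sum_congr rfl fun i _ => ?_
  rw [← (h₁ i).tsum_sub (h₂ i)]
  exact tsum_congr fun j => (mul_sub _ _ _).symm

variable {Φ : Fin r → (Fin d → ℝ) → ℂ} {p q : ℝ≥0∞}

/-- The generators are dominated on the coset of `x` by their local suprema. -/
def IsDominatedAt (Φ : Fin r → (Fin d → ℝ) → ℂ) (x : Fin d → ℝ) : Prop :=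
  ∀ i l, ‖Φ i (x + zc l)‖ₑ ≤ amal (Φ i) l

theorem ae_isDominatedAt (Φ : Fin r → (Fin d → ℝ) → ℂ) :
    ∀ᵐ x ∂(volume.restrict unitBox), IsDominatedAt Φ x := by
  refine ae_all_iff.2 fun i => ae_all_iff.2 fun l => ?_
  refine ae_restrict_of_ae_restrict_of_subset unitBox_subset_cube ?_
  exact ENNReal.ae_le_essSup _

/-- The sum over the generators of their local suprema. -/
noncomputable def totalAmal (Φ : Fin r → (Fin d → ℝ) → ℂ) (l : Fin d → ℤ) : ℝ≥0∞ :=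
  ∑ i, amal (Φ i) l

theorem IsDominatedAt.le_totalAmal {x : Fin d → ℝ} (hx : IsDominatedAt Φ x) (i : Fin r)
    (l : Fin d → ℤ) : ‖Φ i (x + zc l)‖ₑ ≤ totalAmal Φ l :=
  (hx i l).trans (Finset.single_le_sum (f := fun i => amal (Φ i) l)
    (fun _ _ => zero_le) (Finset.mem_univ i))

theorem boxNorm_synOp_le (hm0 : ∀ k, m k ≠ 0) (hmt : ∀ k, m k ≠ ∞)
    (hM : ∀ k j, m k ≤ M (k - j) * m j) (k : Fin d → ℤ) :
    boxNorm ∞ (SynOp Φ c) k * m k ≤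
      ∑' j, M (k - j) * totalAmal Φ (k - j) * coeffSize m c j := by
  refine boxNorm_top_mul_le (hm0 k) (hmt k) ?_
  filter_upwards [ae_isDominatedAt Φ] with x hx
  rw [SynOp_add_zc]
  exact enorm_cosetSyn_mul_le hM hx.le_totalAmal k

theorem boxNorm_synOp_smul_le (hp : 1 ≤ p) (hq : 1 ≤ q) (hm0 : ∀ k, m k ≠ 0)
    (hmt : ∀ k, m k ≠ ∞) (hM : ∀ k j, m k ≤ M (k - j) * m j)
    (hsum : ∑' l, M l * totalAmal Φ l < ∞) {w : (Fin d → ℤ) → ℝ} (hw : ∀ j, 0 ≤ w j)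
    (hc : seqNorm q (coeffSize m c) < ∞)
    (hwc : seqNorm p (fun j => ENNReal.ofReal (w j) * coeffSize m c j) < ∞) (k : Fin d → ℤ) :
    boxNorm ∞ (SynOp Φ fun i j => (w j : ℂ) * c i j) k * m k ≤
      ENNReal.ofReal (w k) * (boxNorm ∞ (SynOp Φ c) k * m k) +
        ∑' j, M (k - j) * totalAmal Φ (k - j) *
          (ENNReal.ofReal |w j - w k| * coeffSize m c j) := by
  refine boxNorm_top_mul_le (hm0 k) (hmt k) ?_
  filter_upwards [ae_isDominatedAt Φ, boxNorm_top_le_iff.1 (le_refl (boxNorm ∞ (SynOp Φ c) k))]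
    with x hx hx'
  have h₂ : ∀ i, Summable fun j => c i j * Φ i (x + zc (k - j)) :=
    summable_coset (ψ := fun i l => Φ i (x + zc l)) hm0 hM hx.le_totalAmal
      (conv_lt_top hq hsum hc k)
  have h₁ : ∀ i, Summable fun j => (w j : ℂ) * c i j * Φ i (x + zc (k - j)) := by
    refine summable_coset (ψ := fun i l => Φ i (x + zc l)) (c := fun i j => (w j : ℂ) * c i j)
      hm0 hM hx.le_totalAmal ?_
    simp_rw [coeffSize_smul, abs_of_nonneg (hw _)]
    exact conv_lt_top hp hsum hwc k
  rw [SynOp_add_zc, cosetSyn_smul_eq (ψ := fun i l => Φ i (x + zc l)) w h₁ h₂, ← SynOp_add_zc]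
  refine (mul_le_mul_left (enorm_add_le _ _) _).trans ?_
  rw [add_mul]
  refine add_le_add ?_ ?_
  · rw [enorm_mul, mul_assoc, enorm_coe_real, Real.enorm_of_nonneg (hw k)]
    gcongr
  · refine (enorm_cosetSyn_mul_le hM hx.le_totalAmal k).trans_eq (tsum_congr fun j => ?_)
    rw [coeffSize_smul (fun j => w j - w k)]

end Synthesis

section Transfer

variable {d r : ℕ} {μ : (Fin d → ℝ) → ℝ} {M : (Fin d → ℤ) → ℝ≥0∞}
  {Φ : Fin r → (Fin d → ℝ) → ℂ} {p q K : ℝ≥0∞}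

/-- The restriction of a weight to the lattice. -/
noncomputable def latticeWeight (μ : (Fin d → ℝ) → ℝ) (k : Fin d → ℤ) : ℝ≥0∞ :=
  ENNReal.ofReal (μ (zc k))

theorem lpW_eq_seqNorm (s : ℝ≥0∞) (μ : (Fin d → ℝ) → ℝ) (c : (Fin d → ℤ) → ℂ) :
    lpW s μ c = seqNorm s fun j => ‖c j‖ₑ * latticeWeight μ j := rfl

theorem lpW_le_seqNorm_coeffSize (s : ℝ≥0∞) (c : Fin r → (Fin d → ℤ) → ℂ) (i : Fin r) :
    lpW s μ (c i) ≤ seqNorm s (coeffSize (latticeWeight μ) c) := by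
  rw [lpW_eq_seqNorm]
  exact seqNorm_mono fun j => Finset.single_le_sum
    (f := fun i => ‖c i j‖ₑ * latticeWeight μ j) (fun _ _ => zero_le) (Finset.mem_univ i)

theorem seqNorm_coeffSize_le {s : ℝ≥0∞} (hs : 1 ≤ s) (c : Fin r → (Fin d → ℤ) → ℂ) :
    seqNorm s (coeffSize (latticeWeight μ) c) ≤ ∑ i, lpW s μ (c i) :=
  seqNorm_finset_sum_le hs Finset.univ fun i j => ‖c i j‖ₑ * latticeWeight μ j

/-- Stability in `ℓ^p` bounds the `ℓ^q` norm of the coefficients by the amalgam norm, with local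
component `L^∞` and global component `ℓ^q`, of the synthesized function. -/
theorem Stable.exists_seqNorm_coeffSize_le_amalgam (hp : 1 ≤ p) (hq : 1 ≤ q)
    (hst : Stable p μ Φ) (hμ : ∀ x, 0 ≤ μ x) (hKt : K ≠ ∞)
    (hK : ∀ k, ∀ x ∈ unitBox, ENNReal.ofReal (μ (x + zc k)) ≤ K * ENNReal.ofReal (μ (zc k)))
    (hm0 : ∀ k, latticeWeight μ k ≠ 0)
    (hM : ∀ k j, latticeWeight μ k ≤ M (k - j) * latticeWeight μ j)
    (hsum : ∑' l, M l * totalAmal Φ l < ∞) :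
    ∃ C' < ∞, ∀ c : Fin r → (Fin d → ℤ) → ℂ, seqNorm q (coeffSize (latticeWeight μ) c) < ∞ →
      seqNorm q (coeffSize (latticeWeight μ) c) ≤
        C' * seqNorm q (fun k => boxNorm ∞ (SynOp Φ c) k * latticeWeight μ k) := by
  obtain ⟨C, hC0, hCt, hC⟩ := hst
  obtain ⟨C', hC't, hC'⟩ := exists_seqNorm_le_of_commutator hp hq hsum
    (ENNReal.mul_lt_top hCt hKt.lt_top)
  refine ⟨C', hC't, fun c hc => hC' _ _ hc fun w hw hwc => ?_⟩
  set c' : Fin r → (Fin d → ℤ) → ℂ := fun i j => (w j : ℂ) * c i j with hc'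
  have hsize : (fun j => ENNReal.ofReal (w j) * coeffSize (latticeWeight μ) c j)
      = coeffSize (latticeWeight μ) c' := by
    ext j
    rw [hc', coeffSize_smul, abs_of_nonneg (hw j)]
  have hfin : ∀ i, lpW p μ (c' i) < ∞ := fun i =>
    (lpW_le_seqNorm_coeffSize p c' i).trans_lt (hsize ▸ hwc)
  have hlow := (hC c' hfin).1
  rw [ENNReal.inv_mul_le_iff hC0.ne' hCt.ne] at hlow
  calc seqNorm p (fun j => ENNReal.ofReal (w j) * coeffSize (latticeWeight μ) c j)
      ≤ ∑ i, lpW p μ (c' i) := by rw [hsize]; exact seqNorm_coeffSize_le hp c'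
    _ ≤ C * LpW p μ (SynOp Φ c') := hlow
    _ ≤ C * (K * seqNorm p (fun k => boxNorm ∞ (SynOp Φ c') k * latticeWeight μ k)) := by
        gcongr
        exact LpW_le_seqNorm_boxNorm hp hμ hKt hK _
    _ ≤ _ := by
        rw [← mul_assoc]
        gcongr
        exact seqNorm_mono fun k => boxNorm_synOp_smul_le hp hq hm0
          (fun _ => ENNReal.ofReal_ne_top) hM hsum hw hc hwc k

theorem nullMeasurableSet_sample (hm : ∀ i, AEStronglyMeasurable (Φ i) volume)
    (S : Finset (Fin d → ℤ)) (z : Fin r × S → ℂ) (ε : ℝ) :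
    NullMeasurableSet {x | (fun t : Fin r × S => Φ t.1 (x + zc t.2.1)) ∈ Metric.ball z ε}
      (volume : Measure (Fin d → ℝ)) := by
  have hae : AEMeasurable (fun x => fun t : Fin r × S => Φ t.1 (x + zc t.2.1))
      (volume : Measure (Fin d → ℝ)) := by
    refine aemeasurable_pi_iff.2 fun t => ?_
    exact ((hm t.1).comp_measurePreserving (measurePreserving_add_right volume _)).aemeasurable
  exact hae.nullMeasurableSet_preimage measurableSet_ball

/-- The unit box is covered, up to null sets, by finitely many sets of positive measure on which
finitely many translates of the generators oscillate by less than `ε`. -/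
theorem exists_finite_cover_small_oscillation
    (hm : ∀ i, AEStronglyMeasurable (Φ i) volume) (hfin : ∀ l, totalAmal Φ l ≠ ∞)
    (S : Finset (Fin d → ℤ)) {ε : ℝ} (hε : 0 < ε) (s : ℝ) :
    ∃ A < (∞ : ℝ≥0∞), ∀ᵐ x ∂(volume.restrict unitBox), ∃ E ⊆ unitBox,
      NullMeasurableSet E (volume : Measure (Fin d → ℝ)) ∧ volume E ≠ 0 ∧
      (volume E ^ s)⁻¹ ≤ A ∧
      ∀ y ∈ E, ∀ i, ∀ l ∈ S, ‖Φ i (x + zc l) - Φ i (y + zc l)‖ₑ ≤ 2 * ENNReal.ofReal ε := by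
  classical
  set Ψ : (Fin d → ℝ) → Fin r × S → ℂ := fun x t => Φ t.1 (x + zc t.2.1) with hΨ
  set R : ℝ := ∑ l ∈ S, (totalAmal Φ l).toReal
  have hR : ∀ x, IsDominatedAt Φ x → Ψ x ∈ Metric.closedBall (0 : Fin r × S → ℂ) R := by
    intro x hx
    rw [mem_closedBall_zero_iff, pi_norm_le_iff_of_nonneg
      (Finset.sum_nonneg fun _ _ => ENNReal.toReal_nonneg)]
    rintro ⟨i, l, hl⟩
    refine le_trans ?_ (Finset.single_le_sum (f := fun l => (totalAmal Φ l).toReal)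
      (fun _ _ => ENNReal.toReal_nonneg) hl)
    have := ENNReal.toReal_mono (hfin l) (hx.le_totalAmal i l)
    simpa [hΨ] using this
  obtain ⟨t, -, htfin, hcover⟩ :=
    (isCompact_closedBall (0 : Fin r × S → ℂ) R).finite_cover_balls hε
  set E : (Fin r × S → ℂ) → Set (Fin d → ℝ) := fun z =>
    unitBox ∩ {x | Ψ x ∈ Metric.ball z ε} with hE
  have hEmeas : ∀ z, NullMeasurableSet (E z) (volume : Measure (Fin d → ℝ)) := fun z =>
    measurableSet_unitBox.nullMeasurableSet.inter (nullMeasurableSet_sample hm S z ε)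
  have hEtop : ∀ z, volume (E z) ≠ ∞ := fun z =>
    ((measure_mono Set.inter_subset_left).trans_lt
      (volume_unitBox.trans_lt ENNReal.one_lt_top)).ne
  refine ⟨∑ z ∈ htfin.toFinset.filter (fun z => volume (E z) ≠ 0), (volume (E z) ^ s)⁻¹,
    ENNReal.sum_lt_top.2 fun z hz => ?_, ?_⟩
  · have hz0 := (Finset.mem_filter.1 hz).2
    rw [← ENNReal.rpow_neg]
    exact (ENNReal.rpow_ne_top_of_ne_zero hz0 (hEtop z)).lt_top
  · have hnull : ∀ᵐ x ∂(volume.restrict unitBox : Measure (Fin d → ℝ)),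
        ∀ z ∈ t, volume (E z) = 0 → x ∉ E z := by
      refine (ae_ball_iff htfin.countable).2 fun z _ => ?_
      by_cases hz : volume (E z) = 0
      · filter_upwards [ae_restrict_of_ae (measure_eq_zero_iff_ae_notMem.1 hz)] with x hx _
        exact hx
      · exact Eventually.of_forall fun x h => absurd h hz
    filter_upwards [hnull, ae_isDominatedAt Φ, ae_restrict_mem measurableSet_unitBox]
      with x hx hdom hbox
    obtain ⟨z, hzt, hxz⟩ := Set.mem_iUnion₂.1 (hcover (hR x hdom))
    have hz0 : volume (E z) ≠ 0 := fun h => hx z hzt h ⟨hbox, hxz⟩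
    refine ⟨E z, Set.inter_subset_left, hEmeas z, hz0, ?_, ?_⟩
    · exact Finset.single_le_sum (f := fun z => (volume (E z) ^ s)⁻¹) (fun _ _ => zero_le)
        (Finset.mem_filter.2 ⟨htfin.mem_toFinset.2 hzt, hz0⟩)
    · rintro y ⟨-, hy⟩ i l hl
      have h1 : dist (Φ i (x + zc l)) (z (i, ⟨l, hl⟩)) ≤ ε :=
        (dist_le_pi_dist (Ψ x) z (i, ⟨l, hl⟩)).trans (Metric.mem_ball.1 hxz).le
      have h2 : dist (Φ i (y + zc l)) (z (i, ⟨l, hl⟩)) ≤ ε :=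
        (dist_le_pi_dist (Ψ y) z (i, ⟨l, hl⟩)).trans (Metric.mem_ball.1 hy).le
      have h3 := (dist_triangle_right (Φ i (x + zc l)) (Φ i (y + zc l)) (z (i, ⟨l, hl⟩))).trans
        (add_le_add h1 h2)
      rw [dist_eq_norm] at h3
      rw [← ofReal_norm, two_mul, ← ENNReal.ofReal_add hε.le hε.le]
      exact ENNReal.ofReal_le_ofReal h3

/-- The local suprema of a synthesized function are controlled by its local `L^q` norms, up to a
small multiple of the coefficients. -/
theorem exists_boxNorm_top_le_boxNorm (hq : 1 ≤ q)
    (hm : ∀ i, AEStronglyMeasurable (Φ i) volume) {m : (Fin d → ℤ) → ℝ≥0∞}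
    (hm0 : ∀ k, m k ≠ 0) (hmt : ∀ k, m k ≠ ∞) (hM0 : ∀ l, M l ≠ 0) (hMt : ∀ l, M l ≠ ∞)
    (hM : ∀ k j, m k ≤ M (k - j) * m j) (hsum : ∑' l, M l * totalAmal Φ l < ∞)
    {θ : ℝ≥0∞} (hθ : θ ≠ 0) :
    ∃ A < ∞, ∃ D : (Fin d → ℤ) → ℝ≥0∞, ∑' l, D l ≤ θ ∧
      ∀ c : Fin r → (Fin d → ℤ) → ℂ, seqNorm q (coeffSize m c) < ∞ → ∀ k,
        boxNorm ∞ (SynOp Φ c) k * m k ≤ A * (boxNorm q (SynOp Φ c) k * m k)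
          + ∑' j, D (k - j) * coeffSize m c j := by
  classical
  have hfin : ∀ l, totalAmal Φ l ≠ ∞ := fun l h => by
    refine (ENNReal.ne_top_of_tsum_ne_top hsum.ne l) ?_
    rw [h, ENNReal.mul_top (hM0 l)]
  obtain ⟨η, hη0, hη⟩ := exists_pos_mul_le (a := 4) (by simp) hθ
  obtain ⟨S, hS⟩ := exists_finset_tail_le hsum.ne (η := ENNReal.ofReal η) (by simpa using hη0)
  obtain ⟨ε, hε0, hε⟩ := exists_pos_mul_le (a := ∑ l ∈ S, M l) (θ := ENNReal.ofReal η)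
    (ENNReal.sum_ne_top.2 fun l _ => hMt l) (by simpa using hη0)
  obtain ⟨A, hAt, hA⟩ := exists_finite_cover_small_oscillation hm hfin S hε0 (1 / q.toReal)
  set b : (Fin d → ℤ) → ℝ≥0∞ := fun l =>
    if l ∈ S then 2 * ENNReal.ofReal ε else 2 * totalAmal Φ l with hb
  have hbsum : ∑' l, M l * b l ≤ θ := by
    have hsplit : ∀ l, M l * b l = 2 * (if l ∈ S then M l * ENNReal.ofReal ε else 0)
        + 2 * Set.indicator ((S : Set (Fin d → ℤ))ᶜ) (fun l => M l * totalAmal Φ l) l := by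
      intro l
      by_cases hl : l ∈ S
      · simp [hb, hl]; ring
      · simp [hb, hl]; ring
    simp_rw [hsplit]
    rw [ENNReal.tsum_add, ENNReal.tsum_mul_left, ENNReal.tsum_mul_left,
      tsum_eq_sum (s := S) (fun l hl => if_neg hl), Finset.sum_congr rfl (fun l hl => if_pos hl),
      ← Finset.sum_mul]
    calc _ ≤ 2 * ENNReal.ofReal η + 2 * ENNReal.ofReal η := by gcongr
      _ = 4 * ENNReal.ofReal η := by ring
      _ ≤ θ := hη
  refine ⟨A, hAt, fun l => M l * b l, hbsum, fun c hc k => ?_⟩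
  refine boxNorm_top_mul_le (hm0 k) (hmt k) ?_
  filter_upwards [hA, ae_isDominatedAt Φ] with x ⟨E, hEsub, hEmeas, hE0, hEA, hosc⟩ hx
  set T := ∑' j, M (k - j) * b (k - j) * coeffSize m c j with hT
  set f := SynOp Φ c
  set u : ℝ≥0∞ := (‖f (x + zc k)‖ₑ * m k - T) / m k with hu
  have hsummable : ∀ y, IsDominatedAt Φ y → ∀ i, Summable fun j => c i j * Φ i (y + zc (k - j)) :=
    fun y hy => summable_coset (ψ := fun i l => Φ i (y + zc l)) hm0 hM hy.le_totalAmal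
      (conv_lt_top hq hsum hc k)
  have hpoint : ∀ y ∈ E, IsDominatedAt Φ y → u ≤ ‖f (y + zc k)‖ₑ := by
    intro y hyE hy
    refine ENNReal.div_le_of_le_mul (tsub_le_iff_right.2 ?_)
    have hbound : ∀ i l, ‖Φ i (x + zc l) - Φ i (y + zc l)‖ₑ ≤ b l := by
      intro i l
      by_cases hl : l ∈ S
      · simpa [hb, hl] using hosc y hyE i l hl
      · simp only [hb, hl, if_false]
        refine enorm_sub_le.trans ?_
        rw [two_mul]
        exact add_le_add (hx.le_totalAmal i l) (hy.le_totalAmal i l)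
    have hdiff := enorm_cosetSyn_mul_le (c := c) hM hbound k
    rw [← cosetSyn_sub (ψ := fun i l => Φ i (x + zc l)) (ψ' := fun i l => Φ i (y + zc l)) k
      (hsummable x hx) (hsummable y hy), ← SynOp_add_zc, ← SynOp_add_zc] at hdiff
    calc ‖f (x + zc k)‖ₑ * m k ≤ (‖f (y + zc k)‖ₑ + ‖f (x + zc k) - f (y + zc k)‖ₑ) * m k := by
          gcongr
          simpa using enorm_add_le (f (y + zc k)) (f (x + zc k) - f (y + zc k))
      _ ≤ ‖f (y + zc k)‖ₑ * m k + T := by rw [add_mul]; gcongr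
  have hq0 : q ≠ 0 := (zero_lt_one.trans_le hq).ne'
  have hle : u * volume E ^ (1 / q.toReal) ≤ boxNorm q f k := by
    have hne : (volume.restrict E : Measure (Fin d → ℝ)) ≠ 0 := by
      rwa [Ne, Measure.restrict_eq_zero]
    calc u * volume E ^ (1 / q.toReal) = eLpNorm (fun _ => u) q (volume.restrict E) := by
          rw [eLpNorm_const _ hq0 hne]; simp
      _ ≤ eLpNorm (fun y => f (y + zc k)) q (volume.restrict E) := by
          refine eLpNorm_mono_enorm_ae ?_
          filter_upwards [ae_restrict_mem₀ hEmeas,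
            ae_restrict_of_ae_restrict_of_subset hEsub (ae_isDominatedAt Φ)] with y hyE hy
          simpa using hpoint y hyE hy
      _ ≤ boxNorm q f k := eLpNorm_mono_measure _ (Measure.restrict_mono_set _ hEsub)
  have hEtop : volume E ≠ ∞ :=
    ((measure_mono hEsub).trans_lt (volume_unitBox.trans_lt ENNReal.one_lt_top)).ne
  have hu_le : u ≤ A * boxNorm q f k := by
    have hpow0 : volume E ^ (1 / q.toReal) ≠ 0 :=
      (ENNReal.rpow_pos (pos_iff_ne_zero.2 hE0) hEtop).ne'
    have hpowt : volume E ^ (1 / q.toReal) ≠ ∞ := ENNReal.rpow_ne_top_of_ne_zero hE0 hEtop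
    calc u = (volume E ^ (1 / q.toReal))⁻¹ * (u * volume E ^ (1 / q.toReal)) := by
          rw [mul_comm u, ← mul_assoc, ENNReal.inv_mul_cancel hpow0 hpowt, one_mul]
      _ ≤ A * boxNorm q f k := by gcongr
  rw [← tsub_le_iff_right, ← mul_assoc]
  calc ‖f (x + zc k)‖ₑ * m k - T = u * m k := (ENNReal.div_mul_cancel (hm0 k) (hmt k)).symm
    _ ≤ A * boxNorm q f k * m k := by gcongr

theorem Stable.of_moderate (hp : 1 ≤ p) (hq : 1 ≤ q) (hst : Stable p μ Φ)
    (hm : ∀ i, AEStronglyMeasurable (Φ i) volume) (hμ : ∀ x, 0 ≤ μ x) (hKt : K ≠ ∞)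
    (hK : ∀ k, ∀ x ∈ unitBox, ENNReal.ofReal (μ (x + zc k)) ≤ K * ENNReal.ofReal (μ (zc k)))
    (hK' : ∀ k, ∀ x ∈ unitBox, ENNReal.ofReal (μ (zc k)) ≤ K * ENNReal.ofReal (μ (x + zc k)))
    (hm0 : ∀ k, latticeWeight μ k ≠ 0) (hM0 : ∀ l, M l ≠ 0) (hMt : ∀ l, M l ≠ ∞)
    (hM : ∀ k j, latticeWeight μ k ≤ M (k - j) * latticeWeight μ j)
    (hsum : ∑' l, M l * totalAmal Φ l < ∞) : Stable q μ Φ := by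
  have hmt : ∀ k, latticeWeight μ k ≠ ∞ := fun _ => ENNReal.ofReal_ne_top
  obtain ⟨C', hC't, hC'⟩ :=
    hst.exists_seqNorm_coeffSize_le_amalgam hp hq hμ hKt hK hm0 hM hsum
  obtain ⟨θ, hθ0, hθ⟩ := exists_pos_mul_le (θ := 2⁻¹) hC't.ne (by simp)
  obtain ⟨A, hAt, D, hD, hA⟩ := exists_boxNorm_top_le_boxNorm (Φ := Φ) hq hm hm0 hmt hM0 hMt hM
    hsum (θ := ENNReal.ofReal θ) (by simpa using hθ0)
  set H := ∑' l, M l * totalAmal Φ l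
  set Clow : ℝ≥0∞ := r * (2 * (C' * (A * K)))
  have hlowt : Clow < ∞ := by finiteness
  have hupt : K * H < ∞ := ENNReal.mul_lt_top hKt.lt_top hsum
  set C := Clow + K * H + 1
  have hC0 : 0 < C := by positivity
  have hCt : C < ∞ := by finiteness
  refine ⟨C, hC0, hCt, fun c hc => ⟨?_, ?_⟩⟩
  · have hcoef : seqNorm q (coeffSize (latticeWeight μ) c) < ∞ :=
      (seqNorm_coeffSize_le hq c).trans_lt (ENNReal.sum_lt_top.2 fun i _ => hc i)
    have hF : seqNorm q (fun k => boxNorm ∞ (SynOp Φ c) k * latticeWeight μ k) ≤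
        A * (K * LpW q μ (SynOp Φ c))
          + ENNReal.ofReal θ * seqNorm q (coeffSize (latticeWeight μ) c) := by
      refine (seqNorm_mono (hA c hcoef)).trans ((seqNorm_add_le hq _ _).trans ?_)
      rw [seqNorm_const_mul hq]
      gcongr
      · exact seqNorm_boxNorm_le_LpW hq hμ hKt hK' _
      · refine (seqNorm_conv_le hq D _).trans ?_
        gcongr
    have habs : seqNorm q (coeffSize (latticeWeight μ) c) ≤
        2 * (C' * (A * (K * LpW q μ (SynOp Φ c)))) := by
      refine le_two_mul_of_le_add_half hcoef.ne hθ ((hC' c hcoef).trans ?_)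
      refine (mul_le_mul_right hF C').trans_eq ?_
      ring
    rw [ENNReal.inv_mul_le_iff hC0.ne' hCt.ne]
    calc ∑ i, lpW q μ (c i) ≤ ∑ _i : Fin r, 2 * (C' * (A * (K * LpW q μ (SynOp Φ c)))) :=
          Finset.sum_le_sum fun i _ => (lpW_le_seqNorm_coeffSize q c i).trans habs
      _ = Clow * LpW q μ (SynOp Φ c) := by
          rw [Finset.sum_const, Finset.card_univ, Fintype.card_fin, nsmul_eq_mul]
          ring
      _ ≤ C * LpW q μ (SynOp Φ c) := by
          gcongr
          exact le_self_add.trans le_self_add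
  · calc LpW q μ (SynOp Φ c)
        ≤ K * seqNorm q (fun k => boxNorm ∞ (SynOp Φ c) k * latticeWeight μ k) :=
          LpW_le_seqNorm_boxNorm hq hμ hKt hK _
      _ ≤ K * (H * ∑ i, lpW q μ (c i)) := by
          gcongr
          refine (seqNorm_mono (boxNorm_synOp_le hm0 hmt hM)).trans ?_
          refine (seqNorm_conv_le hq (fun l => M l * totalAmal Φ l) _).trans ?_
          gcongr
          exact seqNorm_coeffSize_le hq c
      _ ≤ C * ∑ i, lpW q μ (c i) := by
          rw [← mul_assoc]
          gcongr
          exact le_add_self.trans le_self_add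

theorem stable_of_weight_eq_zero (hq : 1 ≤ q) (hμ : ∀ x, μ x = 0) : Stable q μ Φ := by
  refine ⟨1, one_pos, ENNReal.one_lt_top, fun c _ => ?_⟩
  have h1 : ∀ i, lpW q μ (c i) = 0 := fun i => by
    simpa [lpW_eq_seqNorm, latticeWeight, hμ] using seqNorm_zero hq
  have h2 : LpW q μ (SynOp Φ c) = 0 := by simp [LpW, hμ]
  simp [h1, h2]

end Transfer

/-- Proposition 3.6: if the synthesis operator `S_Φ` has
`ℓ^p_μ`-stability for some `p ∈ [1,∞]`, then it has `ℓ^q_μ`-stability for every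
`q ∈ [1,∞]`. -/
theorem stability_transfer {d r : ℕ} (ω μ : (Fin d → ℝ) → ℝ)
    (hω : IsWeight ω) (hμ : IsModerate ω μ)
    (Φ : Fin r → (Fin d → ℝ) → ℂ)
    (hm : ∀ i, AEStronglyMeasurable (Φ i) volume)
    (hΦ : ∀ i, WW 1 ω (Φ i) < ∞)
    (p : ℝ≥0∞) (hp : 1 ≤ p) (hst : Stable p μ Φ) :
    ∀ q : ℝ≥0∞, 1 ≤ q → Stable q μ Φ := by
  intro q hq
  obtain ⟨hωc, hωs, hω0, -⟩ := hω
  obtain ⟨hμ0, C₀, hC₀, hmod⟩ := hμ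
  by_cases hz : ∃ y, μ y = 0
  · obtain ⟨y, hy⟩ := hz
    refine stable_of_weight_eq_zero hq fun x => le_antisymm ?_ (hμ0 x)
    simpa [hy] using hmod (x - y) y
  push Not at hz
  have hμpos : ∀ x, 0 < μ x := fun x => lt_of_le_of_ne (hμ0 x) (hz x).symm
  have hωpos : ∀ x, 0 < ω x := fun x => by
    have h1 : 0 < C₀ * ω x * μ 0 := (hμpos (x + 0)).trans_le (hmod x 0)
    exact pos_of_mul_pos_right (pos_of_mul_pos_left h1 (hμ0 0)) hC₀.le
  obtain ⟨B, hB⟩ := (isCompact_Icc (a := (0 : Fin d → ℝ)) (b := 1)).bddAbove_image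
    hωc.continuousOn
  have hB' : ∀ x ∈ unitBox, ω x ≤ B := fun x hx =>
    hB (Set.mem_image_of_mem ω (unitBox_subset_cube hx))
  have hmodE : ∀ x y, ENNReal.ofReal (μ (x + y)) ≤
      ENNReal.ofReal (C₀ * ω x) * ENNReal.ofReal (μ y) := fun x y => by
    rw [← ENNReal.ofReal_mul (mul_nonneg hC₀.le (hω0 x))]
    exact ENNReal.ofReal_le_ofReal (hmod x y)
  refine hst.of_moderate (M := fun l => ENNReal.ofReal (C₀ * ω (zc l)))
    (K := ENNReal.ofReal (C₀ * B)) hp hq hm hμ0 ENNReal.ofReal_ne_top ?_ ?_ ?_ ?_ ?_ ?_ ?_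
  · intro k x hx
    exact (hmodE x (zc k)).trans (by gcongr; exact hB' x hx)
  · intro k x hx
    have h1 := hmodE (-x) (x + zc k)
    rw [neg_add_cancel_left, hωs] at h1
    exact h1.trans (by gcongr; exact hB' x hx)
  · intro k
    simpa [latticeWeight] using hμpos (zc k)
  · intro l
    simpa using mul_pos hC₀ (hωpos (zc l))
  · exact fun l => ENNReal.ofReal_ne_top
  · intro k j
    have h1 := hmodE (zc (k - j)) (zc j)
    rwa [zc_sub, sub_add_cancel, ← zc_sub] at h1
  · have h1 : ∀ i, ∑' l, amal (Φ i) l * ENNReal.ofReal (ω (zc l)) < ∞ := fun i => by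
      simpa [WW] using hΦ i
    calc ∑' l, ENNReal.ofReal (C₀ * ω (zc l)) * totalAmal Φ l
        = ENNReal.ofReal C₀ * ∑ i, ∑' l, amal (Φ i) l * ENNReal.ofReal (ω (zc l)) := by
          rw [← Summable.tsum_finsetSum (fun i _ => ENNReal.summable), ← ENNReal.tsum_mul_left]
          refine tsum_congr fun l => ?_
          rw [ENNReal.ofReal_mul hC₀.le, totalAmal, ← Finset.sum_mul]
          ring
      _ < ∞ := ENNReal.mul_lt_top ENNReal.ofReal_lt_top (ENNReal.sum_lt_top.2 fun i _ => h1 i)
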